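/- arXiv:1805.10585 — 2 statements merged into one kernel-verified Lean document; each statement's English description precedes it below -/
import Mathlib

section
/- For every B ∈ 𝔅, the number l(B) of sets C ∈ 𝔅 with C ∩ B ≠ ∅ satisfies l(B) ≤ (4ν)^{2r−1}·(r+1). Consequently L = max{l(B) : B ∈ 𝔅} is well defined and L ≤ (4ν)^{2r−1}·(r+1). -/
/-!
A connected graph on `k` vertices with `2 ≤ k ≤ r + 1` has a closed walk of length `2 * r` from any
given vertex through all the others: inserting detours `a, b, a` into the trivial walk, each towards
an unvisited vertex `b` as long as there is one, reaches a new vertex per two steps. The last step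
only returns to the start, so `2 * r - 1` steps suffice. Hence a member of `𝔅` containing `x` is a
set containing `x` inside the support of a lattice walk of length `2 * r - 1` from `x`. There are at
most `(2 * ν) ^ (2 * r - 1)` such walks, each leaving at most `2 ^ (2 * r - 1)` choices for the set,
and `B` has at most `r + 1` points `x` at which it can meet a member of `𝔅`.
-/

open scoped BigOperators

/-- Points of the lattice ℤ^ν. -/
abbrev Pt (ν : ℕ) := Fin ν → ℤ

/-- The ℓ¹ distance on ℤ^ν: ‖s − t‖ = Σᵢ |sᵢ − tᵢ|. -/
def latDist {ν : ℕ} (s t : Pt ν) : ℕ := ∑ i, (s i - t i).natAbs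

/-- A graph `(V, E)` with vertices in ℤ^ν is 1-connected if every edge joins two
vertices of `V` at distance 1 and the graph is connected. -/
def IsOneConnected {ν : ℕ} (V : Finset (Pt ν)) (E : Finset (Sym2 (Pt ν))) : Prop :=
  (∀ e ∈ E, ∀ x ∈ e, x ∈ V) ∧
  (∀ x y : Pt ν, s(x, y) ∈ E → latDist x y = 1) ∧
  (∀ x ∈ V, ∀ y ∈ V, Relation.ReflTransGen (fun a b => s(a, b) ∈ E) x y)

/-- The size `S(B)` of a finite set `B ⊆ ℤ^ν`: the minimal number of edges of a
1-connected graph `(V, E)` with `B ⊆ V`. -/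
noncomputable def lsize {ν : ℕ} (B : Finset (Pt ν)) : ℕ :=
  sInf {m | ∃ V E, IsOneConnected V E ∧ B ⊆ V ∧ E.card = m}

/-- The collection 𝔅 of finite subsets of ℤ^ν with 1 ≤ S(B) ≤ r. -/
def Bfam (ν r : ℕ) : Set (Finset (Pt ν)) := {B | 1 ≤ lsize B ∧ lsize B ≤ r}

/-- `l(B)`: the number of sets `C ∈ 𝔅` with `C ∩ B ≠ ∅`. -/
noncomputable def lB {ν : ℕ} (r : ℕ) (B : Finset (Pt ν)) : ℕ :=
  {C | C ∈ Bfam ν r ∧ (C ∩ B).Nonempty}.ncard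

/-- The constant `L = max { l(B) : B ∈ 𝔅 }`. -/
noncomputable def Lconst (ν r : ℕ) : ℕ := sSup {n | ∃ B ∈ Bfam ν r, lB r B = n}

section CoveringWalks

variable {α : Type*} {G : SimpleGraph α}

lemma exists_walk_detour {x y a b : α} (p : G.Walk x y) (ha : a ∈ p.support) (hab : G.Adj a b) :
    ∃ q : G.Walk x y, q.length = p.length + 2 ∧ ∀ v, v ∈ q.support ↔ v = b ∨ v ∈ p.support := by
  obtain ⟨p₁, p₂, rfl⟩ := SimpleGraph.Walk.mem_support_iff_exists_append.1 ha
  refine ⟨p₁.append (.cons hab (.cons hab.symm p₂)), ?_, fun v ↦ ?_⟩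
  · simp only [SimpleGraph.Walk.length_append, SimpleGraph.Walk.length_cons]
    lia
  · have hv : v = a → v ∈ p₁.support := by rintro rfl; exact p₁.end_mem_support
    simp only [SimpleGraph.Walk.mem_support_append_iff, SimpleGraph.Walk.support_cons,
      List.mem_cons]
    tauto

variable [Fintype α] [Nontrivial α]

lemma exists_adj_min_card_le_card_insert [DecidableEq α] (hG : G.Connected) {S : Finset α}
    (hS : S.Nonempty) :
    ∃ a ∈ S, ∃ b, G.Adj a b ∧ min (S.card + 1) (Fintype.card α) ≤ (insert b S).card := by
  obtain ⟨x, hx⟩ := hS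
  by_cases hfull : S = Finset.univ
  · obtain ⟨b, hb⟩ := hG.preconnected.exists_adj_of_nontrivial x
    exact ⟨x, hx, b, hb, by simp [hfull]⟩
  · obtain ⟨y, hy⟩ : ∃ y, y ∉ S := by simpa [Finset.eq_univ_iff_forall] using hfull
    obtain ⟨p⟩ := hG x y
    obtain ⟨d, -, hdS, hdS'⟩ := p.exists_boundary_dart (S : Set α) hx hy
    exact ⟨d.fst, hdS, d.snd, d.adj, by simp [Finset.card_insert_of_notMem hdS']⟩

lemma exists_closedWalk_min_card_le_card_support [DecidableEq α] (hG : G.Connected) (x : α)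
    (n : ℕ) :
    ∃ w : G.Walk x x, w.length = 2 * n ∧
      min (n + 1) (Fintype.card α) ≤ w.support.toFinset.card := by
  induction n with
  | zero => exact ⟨.nil, by simp⟩
  | succ n ih =>
    obtain ⟨w, hlength, hcard⟩ := ih
    obtain ⟨a, ha, b, hab, hinsert⟩ := exists_adj_min_card_le_card_insert hG
      (S := w.support.toFinset) ⟨x, by simp⟩
    obtain ⟨w', hlength', hsupport⟩ := exists_walk_detour w (List.mem_toFinset.1 ha) hab
    have hw' : w'.support.toFinset = insert b w.support.toFinset := by ext v; simp [hsupport]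
    exact ⟨w', by lia, by rw [hw']; lia⟩

lemma exists_walk_length_eq_forall_mem_support (hG : G.Connected) (x : α) {n : ℕ}
    (hn : Fintype.card α ≤ n + 1) :
    ∃ (y : α) (w : G.Walk x y), w.length = 2 * n - 1 ∧ ∀ v, v ∈ w.support := by
  classical
  obtain ⟨w, hlength, hcard⟩ := exists_closedWalk_min_card_le_card_support hG x n
  rw [min_eq_right hn] at hcard
  have huniv : w.support.toFinset = Finset.univ :=
    Finset.eq_univ_of_card _ (le_antisymm (Finset.card_le_univ _) hcard)
  have hw (v : α) : v ∈ w.support := List.mem_toFinset.1 (huniv ▸ Finset.mem_univ v)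
  cases w with
  | nil =>
    obtain ⟨y, hy⟩ := exists_ne x
    simpa [hy] using hw y
  | cons h p =>
    -- The walk is closed, so `p` alone already covers `x`; it runs towards `x` and is reversed.
    rw [SimpleGraph.Walk.length_cons] at hlength
    refine ⟨_, p.reverse, by rw [SimpleGraph.Walk.length_reverse]; lia, fun v ↦ ?_⟩
    rcases List.mem_cons.1 (hw v) with rfl | hv <;> simp [*]

end CoveringWalks

section CountingSets

variable {α : Type*} [DecidableEq α] (G : SimpleGraph α) [G.LocallyFinite]

/-- The vertex sets of the walks of length `n` in `G` that start at `x`. -/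
def walkSupports : ℕ → α → Finset (Finset α)
  | 0, x => {{x}}
  | n + 1, x => (G.neighborFinset x).biUnion fun y ↦ (walkSupports n y).image (insert x)

/-- The finite sets that contain `x` and are covered by a walk of length `n` in `G` starting
at `x`. -/
def setsAlongWalks (n : ℕ) (x : α) : Finset (Finset α) :=
  (walkSupports G n x).biUnion (Finset.Icc {x})

variable {G}

lemma support_toFinset_mem_walkSupports {x y : α} (w : G.Walk x y) :
    w.support.toFinset ∈ walkSupports G w.length x := by
  induction w with
  | nil => simp [walkSupports]
  | @cons x y _ h p ih =>
    refine Finset.mem_biUnion.2 ⟨y, (G.mem_neighborFinset x y).2 h, ?_⟩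
    exact Finset.mem_image.2 ⟨_, ih, by simp⟩

lemma mem_setsAlongWalks {x y : α} (w : G.Walk x y) {C : Finset α} (hx : x ∈ C)
    (hC : ∀ v ∈ C, v ∈ w.support) : C ∈ setsAlongWalks G w.length x :=
  Finset.mem_biUnion.2 ⟨_, support_toFinset_mem_walkSupports w,
    Finset.mem_Icc.2 ⟨Finset.singleton_subset_iff.2 hx, fun v hv ↦ List.mem_toFinset.2 (hC v hv)⟩⟩

lemma mem_of_mem_walkSupports {n : ℕ} {x : α} {S : Finset α} (hS : S ∈ walkSupports G n x) :
    x ∈ S := by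
  cases n with
  | zero => simp_all [walkSupports]
  | succ n =>
    simp only [walkSupports, Finset.mem_biUnion, Finset.mem_image] at hS
    obtain ⟨y, -, T, -, rfl⟩ := hS
    exact Finset.mem_insert_self x T

lemma card_le_of_mem_walkSupports {n : ℕ} {x : α} {S : Finset α} (hS : S ∈ walkSupports G n x) :
    S.card ≤ n + 1 := by
  induction n generalizing x S with
  | zero => simp_all [walkSupports]
  | succ n ih =>
    simp only [walkSupports, Finset.mem_biUnion, Finset.mem_image] at hS
    obtain ⟨y, -, T, hT, rfl⟩ := hS
    exact (Finset.card_insert_le x T).trans (Nat.succ_le_succ (ih hT))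

lemma card_walkSupports_le {d : ℕ} (hd : ∀ x, G.degree x ≤ d) (n : ℕ) (x : α) :
    (walkSupports G n x).card ≤ d ^ n := by
  induction n generalizing x with
  | zero => simp [walkSupports]
  | succ n ih =>
    calc (walkSupports G (n + 1) x).card
        ≤ G.degree x * d ^ n :=
          Finset.card_biUnion_le_card_mul _ _ _ fun y _ ↦ Finset.card_image_le.trans (ih y)
      _ ≤ d * d ^ n := Nat.mul_le_mul_right _ (hd x)
      _ = d ^ (n + 1) := (pow_succ' d n).symm

lemma card_setsAlongWalks_le {d : ℕ} (hd : ∀ x, G.degree x ≤ d) (n : ℕ) (x : α) :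
    (setsAlongWalks G n x).card ≤ (2 * d) ^ n := by
  have hIcc : ∀ S ∈ walkSupports G n x, (Finset.Icc {x} S).card ≤ 2 ^ n := fun S hS ↦ by
    rw [Finset.card_Icc_finset (Finset.singleton_subset_iff.2 (mem_of_mem_walkSupports hS)),
      Finset.card_singleton]
    exact Nat.pow_le_pow_right two_pos (Nat.sub_le_of_le_add (card_le_of_mem_walkSupports hS))
  calc (setsAlongWalks G n x).card
      ≤ (walkSupports G n x).card * 2 ^ n := Finset.card_biUnion_le_card_mul _ _ _ hIcc
    _ ≤ d ^ n * 2 ^ n := Nat.mul_le_mul_right _ (card_walkSupports_le hd n x)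
    _ = (2 * d) ^ n := by rw [mul_pow, mul_comm]

end CountingSets

section ConnectedSubgraphs

variable {α : Type*} {G : SimpleGraph α} {H : G.Subgraph}

lemma ncard_verts_le_ncard_edgeSet_add_one (hH : H.Connected) :
    H.verts.ncard ≤ H.edgeSet.ncard + 1 := by
  have hedges : H.coe.edgeSet.ncard = H.edgeSet.ncard := by
    rw [← H.image_coe_edgeSet_coe,
      Set.ncard_image_of_injective _ (Sym2.map.injective Subtype.val_injective)]
  exact hedges ▸ hH.coe.card_vert_le_card_edgeSet_add_one

lemma mem_setsAlongWalks_of_subset_verts [DecidableEq α] [G.LocallyFinite] (hH : H.Connected)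
    (hfinite : H.verts.Finite) (hnontrivial : H.verts.Nontrivial) {n : ℕ}
    (hn : H.verts.ncard ≤ n + 1) {C : Finset α} (hC : ↑C ⊆ H.verts) {x : α} (hx : x ∈ C) :
    C ∈ setsAlongWalks G (2 * n - 1) x := by
  have := hfinite.fintype
  have := hnontrivial.coe_sort
  obtain ⟨y, w, hlength, hw⟩ := exists_walk_length_eq_forall_mem_support hH.coe ⟨x, hC hx⟩
    (n := n) (by rwa [← Nat.card_eq_fintype_card])
  rw [← hlength, ← w.length_map H.hom]
  refine mem_setsAlongWalks (w.map H.hom) hx fun v hv ↦ ?_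
  rw [SimpleGraph.Walk.support_map]
  exact List.mem_map_of_mem (f := H.hom) (hw ⟨v, hC hv⟩)

end ConnectedSubgraphs

section Lattice

lemma exists_eq_single_of_sum_eq_one {ι : Type*} [Fintype ι] [DecidableEq ι] {f : ι → ℕ}
    (h : ∑ i, f i = 1) : ∃ i, f = Pi.single i 1 := by
  obtain ⟨i, hi⟩ := (Finsupp.sum_eq_one_iff (Finsupp.equivFunOnFinite.symm f)).1
    (by simpa [Finsupp.sum_fintype] using h)
  exact ⟨i, by simpa [Finsupp.single_eq_pi_single] using congrArg DFunLike.coe hi⟩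

variable {ν : ℕ}

lemma latDist_comm (x y : Pt ν) : latDist x y = latDist y x :=
  Finset.sum_congr rfl fun _ _ ↦ by lia

lemma latDist_eq_one_iff {x y : Pt ν} :
    latDist x y = 1 ↔ ∃ (i : Fin ν) (ε : ℤˣ), x + Pi.single i (ε : ℤ) = y := by
  constructor
  · intro h
    obtain ⟨i, hi⟩ := exists_eq_single_of_sum_eq_one h
    have hunit : IsUnit (y i - x i) := by
      have hdiff : (x i - y i).natAbs = 1 := by simpa using congrFun hi i
      rw [Int.isUnit_iff_natAbs_eq]
      lia
    refine ⟨i, hunit.unit, funext fun j ↦ ?_⟩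
    obtain rfl | hji := eq_or_ne j i
    · simp
    · have hdiff : x j - y j = 0 := by simpa [hji] using congrFun hi j
      simpa [hji] using sub_eq_zero.1 hdiff
  · rintro ⟨i, ε, rfl⟩
    simp only [latDist, Pi.add_apply, sub_add_cancel_left, Int.natAbs_neg]
    rw [Finset.sum_eq_single i] <;> simp +contextual

/-- The nearest-neighbour graph on `ℤ^ν`, in which the 1-connected graphs are the finite connected
subgraphs. -/
def latticeGraph (ν : ℕ) : SimpleGraph (Pt ν) where
  Adj x y := latDist x y = 1
  symm := ⟨fun x y h ↦ latDist_comm x y ▸ h⟩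
  loopless := ⟨fun x h ↦ by simp [latDist] at h⟩

/-- The lattice points at distance one from `x`. -/
def latNeighbors (x : Pt ν) : Finset (Pt ν) :=
  Finset.univ.image fun s : Fin ν × ℤˣ ↦ x + Pi.single s.1 (s.2 : ℤ)

instance : (latticeGraph ν).LocallyFinite := fun x ↦
  Fintype.ofFinset (latNeighbors x) fun y ↦ by
    simp [latNeighbors, latticeGraph, latDist_eq_one_iff]

lemma degree_latticeGraph_le (x : Pt ν) : (latticeGraph ν).degree x ≤ 2 * ν := by
  rw [← SimpleGraph.card_neighborSet_eq_degree, Fintype.card_ofFinset]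
  refine Finset.card_image_le.trans ?_
  simp [mul_comm]

variable {V : Finset (Pt ν)} {E : Finset (Sym2 (Pt ν))}

/-- A 1-connected graph `(V, E)` as a subgraph of the lattice. -/
def IsOneConnected.toSubgraph (h : IsOneConnected V E) : (latticeGraph ν).Subgraph where
  verts := V
  Adj x y := s(x, y) ∈ E
  adj_sub := h.2.1 _ _
  edge_vert hxy := h.1 _ hxy _ (Sym2.mem_mk_left _ _)
  symm := ⟨fun _ _ hxy ↦ Sym2.eq_swap ▸ hxy⟩

lemma IsOneConnected.edgeSet_toSubgraph (h : IsOneConnected V E) :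
    h.toSubgraph.edgeSet = E := by
  ext e
  induction e with | _ x y => exact Iff.rfl

lemma IsOneConnected.connected_toSubgraph (h : IsOneConnected V E) (hV : V.Nonempty) :
    h.toSubgraph.Connected := by
  refine SimpleGraph.Subgraph.connected_iff.2 ⟨⟨fun ⟨x, hx⟩ ⟨y, hy⟩ ↦ ?_⟩, hV⟩
  have hxy := h.2.2 x hx y hy
  induction hxy with
  | refl => exact .rfl
  | @tail a b _ hab ih =>
    have ha : a ∈ V := h.1 _ hab a (Sym2.mem_mk_left a b)
    have hab' : h.toSubgraph.coe.Adj ⟨a, ha⟩ ⟨b, hy⟩ := hab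
    exact (ih ha).trans hab'.reachable

lemma IsOneConnected.card_le (h : IsOneConnected V E) : V.card ≤ E.card + 1 := by
  obtain rfl | hV := V.eq_empty_or_nonempty
  · simp
  · have hle := ncard_verts_le_ncard_edgeSet_add_one (h.connected_toSubgraph hV)
    rw [h.edgeSet_toSubgraph, Set.ncard_coe_finset] at hle
    exact (Set.ncard_coe_finset V).symm.trans_le hle

lemma IsOneConnected.nontrivial (h : IsOneConnected V E) (hE : E.Nonempty) : V.Nontrivial := by
  obtain ⟨e, he⟩ := hE
  induction e with | _ x y =>
  have hxy : (latticeGraph ν).Adj x y := h.2.1 x y he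
  exact ⟨x, h.1 _ he x (by simp), y, h.1 _ he y (by simp), hxy.ne⟩

end Lattice

section SmallSets

variable {ν r : ℕ} {B C : Finset (Pt ν)}

lemma exists_isOneConnected_of_mem_Bfam (hC : C ∈ Bfam ν r) :
    ∃ V E, IsOneConnected V E ∧ C ⊆ V ∧ E.Nonempty ∧ E.card ≤ r := by
  -- `sInf ∅ = 0`, so the positive size of `C` guarantees that `C` lies in some 1-connected graph.
  obtain ⟨V, E, hVE, hCV, hE⟩ := Nat.sInf_mem (Nat.nonempty_of_pos_sInf hC.1)
  exact ⟨V, E, hVE, hCV, Finset.card_pos.1 (hC.1.trans_eq hE.symm), hE.trans_le hC.2⟩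

lemma card_le_of_mem_Bfam (hB : B ∈ Bfam ν r) : B.card ≤ r + 1 := by
  obtain ⟨V, E, hVE, hBV, -, hE⟩ := exists_isOneConnected_of_mem_Bfam hB
  exact (Finset.card_le_card hBV).trans (hVE.card_le.trans (Nat.succ_le_succ hE))

lemma mem_setsAlongWalks_of_mem_Bfam (hC : C ∈ Bfam ν r) {x : Pt ν} (hx : x ∈ C) :
    C ∈ setsAlongWalks (latticeGraph ν) (2 * r - 1) x := by
  obtain ⟨V, E, hVE, hCV, hE, hEr⟩ := exists_isOneConnected_of_mem_Bfam hC
  refine mem_setsAlongWalks_of_subset_verts (hVE.connected_toSubgraph ⟨x, hCV hx⟩)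
    V.finite_toSet (hVE.nontrivial hE) ?_ hCV hx
  exact (Set.ncard_coe_finset V).trans_le (hVE.card_le.trans (Nat.succ_le_succ hEr))

lemma setOf_inter_nonempty_subset_biUnion (r : ℕ) (B : Finset (Pt ν)) :
    {C | C ∈ Bfam ν r ∧ (C ∩ B).Nonempty} ⊆
      ↑(B.biUnion (setsAlongWalks (latticeGraph ν) (2 * r - 1))) := by
  rintro C ⟨hC, x, hx⟩
  obtain ⟨hxC, hxB⟩ := Finset.mem_inter.1 hx
  exact Finset.mem_biUnion.2 ⟨x, hxB, mem_setsAlongWalks_of_mem_Bfam hC hxC⟩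

lemma finite_setOf_inter_nonempty (r : ℕ) (B : Finset (Pt ν)) :
    {C | C ∈ Bfam ν r ∧ (C ∩ B).Nonempty}.Finite :=
  (Finset.finite_toSet _).subset (setOf_inter_nonempty_subset_biUnion r B)

lemma lB_le_card_mul (r : ℕ) (B : Finset (Pt ν)) :
    lB r B ≤ B.card * (4 * ν) ^ (2 * r - 1) := by
  calc lB r B
      ≤ (B.biUnion (setsAlongWalks (latticeGraph ν) (2 * r - 1))).card := by
        rw [← Set.ncard_coe_finset]
        exact Set.ncard_le_ncard (setOf_inter_nonempty_subset_biUnion r B) (Finset.finite_toSet _)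
    _ ≤ B.card * (2 * (2 * ν)) ^ (2 * r - 1) :=
        Finset.card_biUnion_le_card_mul _ _ _ fun x _ ↦
          card_setsAlongWalks_le degree_latticeGraph_le _ x
    _ = B.card * (4 * ν) ^ (2 * r - 1) := by simp only [← mul_assoc, Nat.reduceMul]

lemma lB_le_of_mem_Bfam (hB : B ∈ Bfam ν r) : lB r B ≤ (4 * ν) ^ (2 * r - 1) * (r + 1) :=
  calc lB r B
      ≤ B.card * (4 * ν) ^ (2 * r - 1) := lB_le_card_mul r B
    _ ≤ (r + 1) * (4 * ν) ^ (2 * r - 1) := Nat.mul_le_mul_right _ (card_le_of_mem_Bfam hB)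
    _ = (4 * ν) ^ (2 * r - 1) * (r + 1) := mul_comm _ _

end SmallSets

/-- For every `B ∈ 𝔅` the number `l(B)` of sets `C ∈ 𝔅` with
`C ∩ B ≠ ∅` satisfies `l(B) ≤ (4ν)^{2r−1}(r+1)`. Consequently
`L = max { l(B) : B ∈ 𝔅 }` is well defined and `L ≤ (4ν)^{2r−1}(r+1)`. -/
theorem lB_le_and_Lconst_le {ν r : ℕ} (hν : 1 ≤ ν) (hr : 1 ≤ r) :
    (∀ B ∈ Bfam ν r,
      {C | C ∈ Bfam ν r ∧ (C ∩ B).Nonempty}.Finite ∧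
      lB r B ≤ (4 * ν) ^ (2 * r - 1) * (r + 1)) ∧
    BddAbove {n | ∃ B ∈ Bfam ν r, lB r B = n} ∧
    Lconst ν r ≤ (4 * ν) ^ (2 * r - 1) * (r + 1) := by
  have hub : ∀ n ∈ {n | ∃ B ∈ Bfam ν r, lB r B = n}, n ≤ (4 * ν) ^ (2 * r - 1) * (r + 1) := by
    rintro n ⟨B, hB, rfl⟩
    exact lB_le_of_mem_Bfam hB
  exact ⟨fun B hB ↦ ⟨finite_setOf_inter_nonempty r B, lB_le_of_mem_Bfam hB⟩, ⟨_, hub⟩,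
    csSup_le' hub⟩
end

section
/- Let Q ⊂ ℤ^ν be a finite set with at least two elements, q = S(Q), and fix an integer n > 1. Then the number of Q-connected families Γ of length n is less than 2^{2q}·(2·(8ν)^{2r})^n. -/
/-!
Families of connected sets are counted by exploration: items are discovered from points, at most `K`
items from each point, and a discovered item reveals at most `s` new points. Let `f (P, m)` be the
number of multisets of `m` items that can be discovered completely, starting from the finite point
set `P`. Inspect a point `p ∈ P`: either it discovers nothing and can be dropped, or one item
discovered from `p` is removed and its points are added to `P`. Hence
`f (P, m + 1) ≤ f (P \ {p}, m + 1) + K * f (P', m)` with `|P'| ≤ |P| + s`, and induction gives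
`f (P, m) ≤ (2 ^ |P| - 1) * A ^ m` for `m ≥ 1`, where `A = 2 ^ (s + 1) * K`.

A set of size at most `r` through a point `x` is a marking of the vertices of a 1-connected graph
with at most `r + 1` vertices, and the vertices are explored from `x` along the edges
(`K = 4 * ν`, `s = 1`); so there are at most `∑ m ≤ r, (16 * ν) ^ m < 2 * (16 * ν) ^ r` such sets.
A `Q`-connected family is explored from the points of `Q`, each member revealing its points
(`s = r`). Finally `|Q| ≤ q + 1`, because a connected graph has at most one more vertex than
edges, and `2 ^ (q + 1) - 1 ≤ 2 ^ (2 * q)`.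
-/

open scoped BigOperators

/-- A family `Γ = {(C₁,n₁), …, (C_k,n_k)}` of distinct sets with positive multiplicities
is encoded as a finitely supported function `Γ : Finset (ℤ^ν) →₀ ℕ`; its length is
`|Γ| = n₁ + ⋯ + n_k`. -/
def famLen {ν : ℕ} (Γ : Finset (Pt ν) →₀ ℕ) : ℕ := Γ.sum fun _ n => n

/-- A finite sequence of subsets of ℤ^ν is connected if the graph on its index set,
with an edge between `i` and `j` whenever the `i`-th and `j`-th sets intersect,
is connected. -/
def listConnected {ν : ℕ} (l : List (Finset (Pt ν))) : Prop :=
  ∀ i j : Fin l.length,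
    Relation.ReflTransGen (fun a b : Fin l.length => (l.get a ∩ l.get b).Nonempty) i j

/-- A family `Γ = {(C₁,n₁), …, (C_k,n_k)}` is `Q`-connected if the sequence
`(Q, C₁, …, C_k)` is connected. -/
def QConnected {ν : ℕ} (Q : Finset (Pt ν)) (Γ : Finset (Pt ν) →₀ ℕ) : Prop :=
  listConnected (Q :: Γ.support.toList)

section Exploration

variable {α β : Type*} (R : β → α → Prop) (pts : α → Finset β)

/-- The items of `T` that can be discovered from the points of `P`: a known point `p` discovers an
item `c` when `R p c`, and a discovered item `c` makes the points of `pts c` known. -/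
inductive Discovered (P : Finset β) (T : Multiset α) : α → Prop
  | of_mem {p : β} {c : α} (hp : p ∈ P) (hc : c ∈ T) (hpc : R p c) : Discovered P T c
  | of_discovered {c d : α} {p : β} (hc : Discovered P T c) (hp : p ∈ pts c) (hd : d ∈ T)
      (hpd : R p d) : Discovered P T d

/-- The multisets of `m` items all of whose items are discovered from the points of `P`. -/
def explorable (P : Finset β) (m : ℕ) : Set (Multiset α) :=
  {T | T.card = m ∧ ∀ c ∈ T, Discovered R pts P T c}

variable {R pts}

lemma not_discovered_empty {T : Multiset α} {c : α} : ¬Discovered R pts ∅ T c := by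
  intro h
  induction h with
  | of_mem hp _ _ => simp at hp
  | of_discovered _ _ _ _ ih => exact ih

lemma explorable_zero (P : Finset β) : explorable R pts P 0 = {0} := by
  ext T
  simp +contextual [explorable, Multiset.card_eq_zero]

lemma explorable_empty_succ (m : ℕ) : explorable R pts ∅ (m + 1) = ∅ := by
  refine Set.eq_empty_of_forall_notMem fun T ⟨hcard, hT⟩ => ?_
  obtain ⟨c, hc⟩ := Multiset.card_pos_iff_exists_mem.1 (by rw [hcard]; exact m.succ_pos)
  exact not_discovered_empty (hT c hc)

variable [DecidableEq β]

lemma Discovered.of_insert {p : β} {P : Finset β} {T : Multiset α} {d : α}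
    (h : Discovered R pts (insert p P) T d) (hp : ∀ c ∈ T, ¬R p c) : Discovered R pts P T d := by
  induction h with
  | of_mem hx hc hxc =>
    rcases Finset.mem_insert.1 hx with rfl | hx
    · exact absurd hxc (hp _ hc)
    · exact .of_mem hx hc hxc
  | of_discovered _ hx hd hxd ih => exact .of_discovered ih hx hd hxd

lemma Discovered.erase [DecidableEq α] {P : Finset β} {T : Multiset α} {c d : α}
    (h : Discovered R pts P T d) (hdc : d ≠ c) :
    Discovered R pts (P ∪ pts c) (T.erase c) d := by
  induction h with
  | of_mem hx hd hxd =>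
    exact .of_mem (Finset.mem_union_left _ hx) ((Multiset.mem_erase_of_ne hdc).2 hd) hxd
  | @of_discovered e d x _ hx hd hxd ih =>
    have hd' := (Multiset.mem_erase_of_ne hdc).2 hd
    by_cases hec : e = c
    · subst hec
      exact .of_mem (Finset.mem_union_right _ hx) hd' hxd
    · exact .of_discovered (ih hec) hx hd' hxd

lemma explorable_insert_succ_subset (p : β) (P : Finset β) (m : ℕ) :
    explorable R pts (insert p P) (m + 1) ⊆ explorable R pts P (m + 1) ∪
      ⋃ c ∈ {c | R p c}, (c ::ₘ ·) '' explorable R pts (insert p P ∪ pts c) m := by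
  classical
  rintro T ⟨hcard, hT⟩
  by_cases h : ∃ c ∈ T, R p c
  · obtain ⟨c, hcT, hpc⟩ := h
    refine Or.inr (Set.mem_biUnion hpc ⟨T.erase c, ⟨?_, fun d hd => ?_⟩, Multiset.cons_erase hcT⟩)
    · rw [Multiset.card_erase_of_mem hcT, hcard, Nat.pred_succ]
    · by_cases hdc : d = c
      -- a further occurrence of the removed item is still discovered by `p`
      · exact .of_mem (by simp) hd (hdc ▸ hpc)
      · exact (hT d (Multiset.mem_of_mem_erase hd)).erase hdc
  · push Not at h
    exact Or.inl ⟨hcard, fun c hc => (hT c hc).of_insert h⟩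

variable {K s : ℕ} (hK : ∀ p, {c | R p c}.encard ≤ K)
  (hs : ∀ p c, R p c → ((pts c).erase p).card ≤ s)

include hs in
lemma card_insert_union_le {p : β} {P : Finset β} (hp : p ∉ P) {c : α} (hpc : R p c) :
    (insert p P ∪ pts c).card ≤ P.card + (s + 1) := by
  have hunion : insert p P ∪ pts c = insert p P ∪ (pts c).erase p := by
    ext x
    by_cases hx : x = p <;> simp [hx]
  calc (insert p P ∪ pts c).card ≤ (insert p P).card + ((pts c).erase p).card :=
        hunion ▸ Finset.card_union_le _ _
    _ ≤ (P.card + 1) + s := by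
        rw [Finset.card_insert_of_notMem hp]
        gcongr
        exact hs p c hpc
    _ = P.card + (s + 1) := by ring

include hK hs in
lemma encard_explorable_insert_succ_le {m : ℕ}
    (hm : ∀ P, (explorable R pts P m).encard ≤ 2 ^ P.card * (2 ^ (s + 1) * K) ^ m)
    {p : β} {P : Finset β} (hp : p ∉ P) :
    (explorable R pts (insert p P) (m + 1)).encard ≤
      (explorable R pts P (m + 1)).encard + 2 ^ P.card * (2 ^ (s + 1) * K) ^ (m + 1) := by
  have hfin : {c | R p c}.Finite := Set.finite_of_encard_le_coe (hK p)
  have hterm : ∀ c ∈ hfin.toFinset,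
      ((c ::ₘ ·) '' explorable R pts (insert p P ∪ pts c) m).encard ≤
        2 ^ (P.card + (s + 1)) * (2 ^ (s + 1) * K) ^ m := by
    intro c hc
    refine (Set.encard_image_le _ _).trans ((hm _).trans ?_)
    gcongr
    · norm_num
    · exact card_insert_union_le hs hp (by simpa using hc)
  have hunion : (⋃ c ∈ {c | R p c},
      (c ::ₘ ·) '' explorable R pts (insert p P ∪ pts c) m).encard ≤
        2 ^ P.card * (2 ^ (s + 1) * K) ^ (m + 1) :=
    calc _ ≤ ∑ c ∈ hfin.toFinset,
            ((c ::ₘ ·) '' explorable R pts (insert p P ∪ pts c) m).encard := by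
          simpa using hfin.toFinset.set_encard_biUnion_le
            fun c => (c ::ₘ ·) '' explorable R pts (insert p P ∪ pts c) m
      _ ≤ hfin.toFinset.card • (2 ^ (P.card + (s + 1)) * (2 ^ (s + 1) * (K : ℕ∞)) ^ m) :=
          Finset.sum_le_card_nsmul _ _ _ hterm
      _ ≤ K * (2 ^ (P.card + (s + 1)) * (2 ^ (s + 1) * K) ^ m) := by
          rw [nsmul_eq_mul, ← hfin.encard_eq_coe_toFinset_card]
          gcongr
          exact hK p
      _ = 2 ^ P.card * (2 ^ (s + 1) * K) ^ (m + 1) := by ring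
  calc _ ≤ _ := Set.encard_le_encard (explorable_insert_succ_subset p P m)
    _ ≤ _ := Set.encard_union_le _ _
    _ ≤ _ := by gcongr

include hK hs in
lemma encard_explorable_succ_add_le_of_forall {m : ℕ}
    (hm : ∀ P, (explorable R pts P m).encard ≤ 2 ^ P.card * (2 ^ (s + 1) * K) ^ m)
    (P : Finset β) :
    (explorable R pts P (m + 1)).encard + (2 ^ (s + 1) * K) ^ (m + 1) ≤
      2 ^ P.card * (2 ^ (s + 1) * K) ^ (m + 1) := by
  induction P using Finset.induction_on with
  | empty => simp [explorable_empty_succ]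
  | insert p P hp ih =>
    set A : ℕ∞ := 2 ^ (s + 1) * K
    calc (explorable R pts (insert p P) (m + 1)).encard + A ^ (m + 1)
        ≤ (explorable R pts P (m + 1)).encard + 2 ^ P.card * A ^ (m + 1) + A ^ (m + 1) := by
          gcongr
          exact encard_explorable_insert_succ_le hK hs hm hp
      _ = (explorable R pts P (m + 1)).encard + A ^ (m + 1) + 2 ^ P.card * A ^ (m + 1) := by ring
      _ ≤ 2 ^ P.card * A ^ (m + 1) + 2 ^ P.card * A ^ (m + 1) := by gcongr
      _ = 2 ^ (insert p P).card * A ^ (m + 1) := by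
          rw [Finset.card_insert_of_notMem hp]
          ring

include hK hs in
lemma encard_explorable_le (P : Finset β) (m : ℕ) :
    (explorable R pts P m).encard ≤ 2 ^ P.card * (2 ^ (s + 1) * K) ^ m := by
  induction m generalizing P with
  | zero =>
    rw [explorable_zero, Set.encard_singleton, pow_zero, mul_one]
    exact one_le_pow₀ one_le_two
  | succ m ih => exact le_of_add_le_left (encard_explorable_succ_add_le_of_forall hK hs ih P)

include hK hs in
theorem encard_explorable_succ_add_le (P : Finset β) (m : ℕ) :
    (explorable R pts P (m + 1)).encard + (2 ^ (s + 1) * K) ^ (m + 1) ≤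
      2 ^ P.card * (2 ^ (s + 1) * K) ^ (m + 1) :=
  encard_explorable_succ_add_le_of_forall hK hs (fun P => encard_explorable_le hK hs P m) P

end Exploration

lemma sum_eq_one_iff_exists {ι : Type*} {s : Finset ι} {f : ι → ℕ} :
    ∑ i ∈ s, f i = 1 ↔ ∃ i ∈ s, f i = 1 ∧ ∀ j ∈ s, j ≠ i → f j = 0 := by
  classical
  constructor
  · intro h
    obtain ⟨i, hi, hfi⟩ := Finset.exists_ne_zero_of_sum_ne_zero (h ▸ one_ne_zero)
    have hsplit := Finset.add_sum_erase s f hi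
    have hrest : ∑ j ∈ s.erase i, f j = 0 := by omega
    refine ⟨i, hi, by omega, fun j hj hji => ?_⟩
    exact Finset.sum_eq_zero_iff.1 hrest j (Finset.mem_erase.2 ⟨hji, hj⟩)
  · rintro ⟨i, hi, hfi, hrest⟩
    rw [Finset.sum_eq_single_of_mem i hi hrest, hfi]

section Lattice

variable {ν : ℕ}

lemma latDist_eq_one_iff_s7 {s t : Pt ν} :
    latDist s t = 1 ↔ (SimpleGraph.hasse (Pt ν)).Adj s t := by
  have hunit (m n : ℤ) : (m - n).natAbs = 1 ↔ m ⋖ n ∨ n ⋖ m := by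
    rw [Order.covBy_iff_add_one_eq, Order.covBy_iff_add_one_eq]
    omega
  have hzero (m n : ℤ) : (m - n).natAbs = 0 ↔ m = n := by omega
  rw [latDist, sum_eq_one_iff_exists, SimpleGraph.hasse_adj, Pi.covBy_iff, Pi.covBy_iff]
  simp only [Finset.mem_univ, true_and, true_imp_iff, hunit, hzero, or_and_right, exists_or]
  simp only [eq_comm]

lemma encard_setOf_latDist_eq_one_le (p : Pt ν) : {v | latDist p v = 1}.encard ≤ 2 * ν := by
  have hrange (f : Fin ν → Pt ν) : (Set.range f).encard ≤ ν := by
    simpa [Set.image_univ, Set.encard_univ] using Set.encard_image_le f Set.univ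
  have hsub : {v | latDist p v = 1} ⊆ Set.range (fun i => Function.update p i (p i + 1)) ∪
      Set.range (fun i => Function.update p i (p i - 1)) := by
    intro v hv
    rw [Set.mem_ofPred_eq, latDist_eq_one_iff_s7, SimpleGraph.hasse_adj,
      Pi.covBy_iff_exists_right_eq, Pi.covBy_iff_exists_left_eq] at hv
    rcases hv with ⟨i, x, hx, rfl⟩ | ⟨i, x, hx, rfl⟩
    · exact Or.inl ⟨i, congrArg _ (Order.covBy_iff_add_one_eq.1 hx)⟩
    · exact Or.inr ⟨i, congrArg _ (Order.covBy_iff_sub_one_eq.1 hx)⟩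
  calc _ ≤ _ := Set.encard_le_encard hsub
    _ ≤ _ := Set.encard_union_le _ _
    _ ≤ (ν : ℕ∞) + ν := add_le_add (hrange _) (hrange _)
    _ = 2 * ν := (two_mul _).symm

open scoped Classical in
/-- The edges of the nearest-neighbour graph of `ℤ^ν` between points of `V`. This graph is the
Hasse diagram of the product order. -/
noncomputable def unitEdges (V : Finset (Pt ν)) : Finset (Sym2 (Pt ν)) :=
  V.sym2.filter (· ∈ (SimpleGraph.hasse (Pt ν)).edgeSet)

lemma mem_unitEdges {V : Finset (Pt ν)} {e : Sym2 (Pt ν)} :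
    e ∈ unitEdges V ↔ (∀ x ∈ e, x ∈ V) ∧ e ∈ (SimpleGraph.hasse (Pt ν)).edgeSet := by
  simp [unitEdges]

lemma mk_mem_unitEdges {V : Finset (Pt ν)} {x y : Pt ν} :
    s(x, y) ∈ unitEdges V ↔ (x ∈ V ∧ y ∈ V) ∧ (SimpleGraph.hasse (Pt ν)).Adj x y := by
  simp [mem_unitEdges]

-- In an order interval every point is joined to the lowest one by a chain of covers.
lemma isOneConnected_Icc_unitEdges (a b : Pt ν) :
    IsOneConnected (Finset.Icc a b) (unitEdges (Finset.Icc a b)) := by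
  set E := unitEdges (Finset.Icc a b)
  have hup {x : Pt ν} (hx : x ∈ Finset.Icc a b) :
      Relation.ReflTransGen (fun u v => s(u, v) ∈ E) a x := by
    obtain ⟨hax, hxb⟩ := Finset.mem_Icc.1 hx
    have hchain := le_iff_reflTransGen_covBy.1 hax
    induction hchain with
    | refl => exact .refl
    | @tail u v hau huv ih =>
      have hau' : a ≤ u := le_iff_reflTransGen_covBy.2 hau
      have hub : u ≤ b := huv.le.trans hxb
      have hu := Finset.mem_Icc.2 ⟨hau', hub⟩
      exact (ih hu hau' hub).tail (mk_mem_unitEdges.2 ⟨⟨hu, hx⟩, Or.inl huv⟩)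
  have : Std.Symm (fun u v => s(u, v) ∈ E) := ⟨fun u v huv => by rwa [Sym2.eq_swap]⟩
  refine ⟨fun e he => (mem_unitEdges.1 he).1, fun x y hxy => ?_, fun x hx y hy => ?_⟩
  · exact latDist_eq_one_iff_s7.2 (mk_mem_unitEdges.1 hxy).2
  · exact (symm_of (Relation.ReflTransGen fun u v => s(u, v) ∈ E) (hup hx)).trans (hup hy)

lemma exists_isOneConnected_card_eq_lsize (B : Finset (Pt ν)) :
    ∃ V E, IsOneConnected V E ∧ B ⊆ V ∧ E.card = lsize B := by
  obtain ⟨a, ha⟩ := B.bddBelow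
  obtain ⟨b, hb⟩ := B.bddAbove
  have hB : B ⊆ Finset.Icc a b := fun x hx => Finset.mem_Icc.2 ⟨ha hx, hb hx⟩
  exact Nat.sInf_mem (s := {m | ∃ V E, IsOneConnected V E ∧ B ⊆ V ∧ E.card = m})
    ⟨_, _, _, isOneConnected_Icc_unitEdges a b, hB, rfl⟩

namespace IsOneConnected

variable {V : Finset (Pt ν)} {E : Finset (Sym2 (Pt ν))}

lemma reachable_induce (h : IsOneConnected V E) (x y : V) :
    ((SimpleGraph.fromEdgeSet (E : Set (Sym2 (Pt ν)))).induce V).Reachable x y := by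
  suffices ∀ z (hz : z ∈ V), Relation.ReflTransGen (fun a b => s(a, b) ∈ E) x z →
      ((SimpleGraph.fromEdgeSet (E : Set (Sym2 (Pt ν)))).induce V).Reachable x ⟨z, hz⟩ from
    this y y.2 (h.2.2 _ x.2 _ y.2)
  intro z hz hxz
  induction hxz with
  | refl => rfl
  | @tail u v _ huv ih =>
    have hu : u ∈ V := h.1 _ huv u (Sym2.mem_mk_left _ _)
    have hne : u ≠ v := (latDist_eq_one_iff_s7.1 (h.2.1 u v huv)).ne
    refine (ih hu).trans (SimpleGraph.Adj.reachable ?_)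
    exact SimpleGraph.comap_adj.2 ((SimpleGraph.fromEdgeSet_adj _).2 ⟨huv, hne⟩)

lemma card_le_card_add_one (h : IsOneConnected V E) : V.card ≤ E.card + 1 := by
  rcases V.eq_empty_or_nonempty with rfl | hV
  · simp
  set G := SimpleGraph.fromEdgeSet (E : Set (Sym2 (Pt ν)))
  have : Nonempty V := hV.to_subtype
  have hconn : (G.induce (V : Set (Pt ν))).Connected := ⟨h.reachable_induce⟩
  have hGE : G.edgeSet ⊆ E := by
    rw [SimpleGraph.edgeSet_fromEdgeSet]
    exact Set.sdiff_subset
  have hedges : Nat.card (G.induce (V : Set (Pt ν))).edgeSet ≤ E.card :=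
    calc _ ≤ Nat.card E := Nat.card_le_card_of_injective _ ((Set.inclusion_injective hGE).comp
            (SimpleGraph.Embedding.induce (V : Set (Pt ν))).mapEdgeSet.injective)
      _ = E.card := Nat.card_eq_card_toFinset _ |>.trans (by simp)
  calc V.card = Nat.card V := (Nat.card_eq_finsetCard V).symm
    _ ≤ _ := hconn.card_vert_le_card_edgeSet_add_one
    _ ≤ E.card + 1 := by gcongr

end IsOneConnected

lemma card_le_lsize_add_one (B : Finset (Pt ν)) : B.card ≤ lsize B + 1 := by
  obtain ⟨V, E, h, hB, hE⟩ := exists_isOneConnected_card_eq_lsize B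
  exact (Finset.card_le_card hB).trans (hE ▸ h.card_le_card_add_one)

end Lattice

section SetsThroughPoint

variable {ν : ℕ}

/-- The discovery relation from a lattice point to its neighbours. A discovered point carries a mark
in `Bool`, so that an explored multiset describes a vertex set together with a subset of it. -/
def IsMarkedNeighbour (p : Pt ν) (c : Pt ν × Bool) : Prop := latDist p c.1 = 1

/-- The multisets of `m` marked points that can be explored from `x` along unit edges. -/
def markedExplorable (x : Pt ν) (m : ℕ) : Set (Multiset (Pt ν × Bool)) :=
  explorable IsMarkedNeighbour (fun c => {c.1}) {x} m

lemma encard_setOf_isMarkedNeighbour_le (p : Pt ν) :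
    {c | IsMarkedNeighbour p c}.encard ≤ (4 * ν : ℕ) := by
  have hprod : {c | IsMarkedNeighbour p c} = {v | latDist p v = 1} ×ˢ Set.univ := by
    ext c
    simp [IsMarkedNeighbour]
  calc {c | IsMarkedNeighbour p c}.encard ≤ 2 * ν * 2 := by
        rw [hprod, Set.encard_prod, Set.encard_univ]
        gcongr
        · exact encard_setOf_latDist_eq_one_le p
        · simp
    _ = (4 * ν : ℕ) := by
        push_cast
        ring

lemma encard_markedExplorable_le (x : Pt ν) (m : ℕ) :
    (markedExplorable x m).encard ≤ (16 * ν) ^ m := by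
  cases m with
  | zero => simp [markedExplorable, explorable_zero]
  | succ m =>
    have hA : (2 : ℕ∞) ^ (1 + 1) * (4 * ν : ℕ) = 16 * ν := by
      push_cast
      ring
    have h := encard_explorable_succ_add_le (s := 1) (pts := fun c : Pt ν × Bool => {c.1})
      encard_setOf_isMarkedNeighbour_le (fun _ _ _ => Finset.card_erase_le) {x} m
    rw [hA, Finset.card_singleton, pow_one, two_mul] at h
    exact (ENat.add_le_add_iff_right (ENat.natCast_ne_top ((16 * ν) ^ (m + 1)))).1 h

/-- The set described by marked points explored from a point `x` of that set. -/
noncomputable def markedSet (x : Pt ν) (T : Multiset (Pt ν × Bool)) : Finset (Pt ν) :=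
  insert x ((T.filter (·.2)).map Prod.fst).toFinset

/-- All vertices in `V` other than `x`, marked according to their membership in `B`. -/
noncomputable def markVertices (x : Pt ν) (V B : Finset (Pt ν)) : Multiset (Pt ν × Bool) :=
  (V.erase x).val.map fun v => (v, decide (v ∈ B))

lemma mem_markVertices {x : Pt ν} {V B : Finset (Pt ν)} {c : Pt ν × Bool} :
    c ∈ markVertices x V B ↔ (c.1 ≠ x ∧ c.1 ∈ V) ∧ c.2 = decide (c.1 ∈ B) := by
  obtain ⟨v, b⟩ := c
  simp only [markVertices, Multiset.mem_map, Finset.mem_val, Finset.mem_erase, Prod.mk.injEq]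
  grind

lemma markedSet_markVertices {x : Pt ν} {V B : Finset (Pt ν)} (hx : x ∈ B) (hB : B ⊆ V) :
    markedSet x (markVertices x V B) = B := by
  ext v
  simp only [markedSet, Finset.mem_insert, Multiset.mem_toFinset, Multiset.mem_map,
    Multiset.mem_filter, mem_markVertices, Prod.exists]
  grind

lemma IsOneConnected.markVertices_mem_markedExplorable {V : Finset (Pt ν)}
    {E : Finset (Sym2 (Pt ν))} (h : IsOneConnected V E) {x : Pt ν} (hx : x ∈ V)
    (B : Finset (Pt ν)) : markVertices x V B ∈ markedExplorable x (V.card - 1) := by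
  set T := markVertices x V B
  have hpath {y : Pt ν} (hy : Relation.ReflTransGen (fun a b => s(a, b) ∈ E) x y) :
      y ≠ x → Discovered IsMarkedNeighbour (fun c => {c.1}) {x} T (y, decide (y ∈ B)) := by
    induction hy with
    | refl => exact fun hxx => absurd rfl hxx
    | @tail u v _ huv ih =>
      intro hvx
      have hvT : (v, decide (v ∈ B)) ∈ T :=
        mem_markVertices.2 ⟨⟨hvx, h.1 _ huv v (Sym2.mem_mk_right _ _)⟩, rfl⟩
      by_cases hux : u = x
      · exact .of_mem (Finset.mem_singleton.2 hux) hvT (h.2.1 u v huv)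
      · exact .of_discovered (ih hux) (Finset.mem_singleton_self u) hvT (h.2.1 u v huv)
  refine ⟨?_, fun c hc => ?_⟩
  · simp [T, markVertices, hx]
  · obtain ⟨⟨hcx, hcV⟩, hcB⟩ := mem_markVertices.1 hc
    simpa only [← hcB] using hpath (h.2.2 x hx c.1 hcV) hcx

lemma setOf_mem_lsize_le_subset (r : ℕ) (x : Pt ν) : {B | x ∈ B ∧ lsize B ≤ r} ⊆
    ⋃ m ∈ Finset.range (r + 1), markedSet x '' markedExplorable x m := by
  rintro B ⟨hxB, hr⟩
  obtain ⟨V, E, h, hBV, hE⟩ := exists_isOneConnected_card_eq_lsize B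
  have hcard := h.card_le_card_add_one
  refine Set.mem_biUnion (x := V.card - 1) (Finset.mem_range.2 (by omega)) ?_
  exact ⟨_, h.markVertices_mem_markedExplorable (hBV hxB) B, markedSet_markVertices hxB hBV⟩

lemma encard_setOf_mem_lsize_le (r : ℕ) (x : Pt ν) :
    {B | x ∈ B ∧ lsize B ≤ r}.encard ≤ (∑ m ∈ Finset.range (r + 1), (16 * ν) ^ m : ℕ) := by
  push_cast
  calc _ ≤ _ := Set.encard_le_encard (setOf_mem_lsize_le_subset r x)
    _ ≤ _ := Finset.set_encard_biUnion_le _ _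
    _ ≤ _ := Finset.sum_le_sum fun m _ =>
      (Set.encard_image_le _ _).trans (encard_markedExplorable_le x m)

end SetsThroughPoint

section Families

variable {ν r : ℕ} {Q : Finset (Pt ν)}

/-- The discovery relation from a lattice point to the sets of size at most `r` containing it. -/
def IsSmallSetThrough (r : ℕ) (p : Pt ν) (C : Finset (Pt ν)) : Prop := p ∈ C ∧ lsize C ≤ r

lemma QConnected.discovered {Γ : Finset (Pt ν) →₀ ℕ} (h : QConnected Q Γ)
    (hr : ∀ C ∈ Γ.support, lsize C ≤ r) {C : Finset (Pt ν)} (hC : C ∈ Γ.support) :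
    Discovered (IsSmallSetThrough r) id Q (Finsupp.toMultiset Γ) C := by
  set l := Γ.support.toList
  have hmem (i : Fin l.length) : l.get i ∈ Γ.support := Finset.mem_toList.1 (l.get_mem i)
  suffices ∀ j, Relation.ReflTransGen (fun a b : Fin (Q :: l).length =>
      ((Q :: l).get a ∩ (Q :: l).get b).Nonempty) 0 j → ∀ i : Fin l.length, j = i.succ →
      Discovered (IsSmallSetThrough r) id Q (Finsupp.toMultiset Γ) (l.get i) by
    obtain ⟨i, rfl⟩ := List.mem_iff_get.1 (Finset.mem_toList.2 hC)
    exact this _ (h 0 i.succ) i rfl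
  intro j hj
  induction hj with
  | refl => exact fun i hi => absurd hi.symm (Fin.succ_ne_zero i)
  | @tail a b _ hab ih =>
    rintro i rfl
    obtain ⟨p, hp⟩ := hab
    obtain ⟨hpa, hpi⟩ := Finset.mem_inter.1 hp
    have hi := (Finsupp.mem_toMultiset _ _).2 (hmem i)
    have hthrough : IsSmallSetThrough r p (l.get i) := ⟨hpi, hr _ (hmem i)⟩
    rcases Fin.eq_zero_or_eq_succ a with rfl | ⟨k, rfl⟩
    · exact .of_mem hpa hi hthrough
    · exact .of_discovered (ih k rfl) hpa hi hthrough

lemma QConnected.toMultiset_mem_explorable {Γ : Finset (Pt ν) →₀ ℕ} (h : QConnected Q Γ)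
    (hr : ∀ C ∈ Γ.support, lsize C ≤ r) :
    Finsupp.toMultiset Γ ∈ explorable (IsSmallSetThrough r) id Q (famLen Γ) :=
  ⟨Finsupp.card_toMultiset Γ,
    fun C hC => h.discovered hr ((Finsupp.mem_toMultiset Γ C).1 hC)⟩

lemma IsSmallSetThrough.card_erase_le {p : Pt ν} {C : Finset (Pt ν)}
    (h : IsSmallSetThrough r p C) : (C.erase p).card ≤ r := by
  rw [Finset.card_erase_of_mem h.1]
  exact Nat.sub_le_of_le_add ((card_le_lsize_add_one C).trans (Nat.add_le_add_right h.2 1))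

lemma encard_QConnected_families_succ_add_le (r : ℕ) (Q : Finset (Pt ν)) (n : ℕ) :
    {Γ : Finset (Pt ν) →₀ ℕ | (∀ C ∈ Γ.support, lsize C ≤ r) ∧ famLen Γ = n + 1 ∧
      QConnected Q Γ}.encard +
        (2 ^ (r + 1) * ∑ m ∈ Finset.range (r + 1), (16 * ν) ^ m : ℕ) ^ (n + 1) ≤
      2 ^ Q.card * (2 ^ (r + 1) * ∑ m ∈ Finset.range (r + 1), (16 * ν) ^ m : ℕ) ^ (n + 1) := by
  classical
  rw [Nat.cast_mul, Nat.cast_pow, Nat.cast_ofNat]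
  refine le_trans ?_ (encard_explorable_succ_add_le (encard_setOf_mem_lsize_le r)
    (fun _ _ hC => IsSmallSetThrough.card_erase_le hC) Q n)
  gcongr
  exact Set.encard_le_encard_of_injOn
    (fun Γ ⟨hr, hlen, hΓ⟩ => hlen ▸ hΓ.toMultiset_mem_explorable hr)
    (Function.LeftInverse.injective Finsupp.toMultiset_toFinsupp).injOn

lemma two_pow_mul_geomSum_lt (hν : 1 ≤ ν) (hr : 1 ≤ r) :
    2 ^ (r + 1) * ∑ m ∈ Finset.range (r + 1), (16 * ν) ^ m < 2 * (8 * ν) ^ (2 * r) := by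
  have hgeom : ∑ m ∈ Finset.range (r + 1), (16 * ν) ^ m < 2 * (16 * ν) ^ r := by
    rw [Finset.sum_range_succ, two_mul]
    gcongr
    exact Nat.geomSum_lt (by omega) fun m hm => Finset.mem_range.1 hm
  calc 2 ^ (r + 1) * ∑ m ∈ Finset.range (r + 1), (16 * ν) ^ m
      < 2 ^ (r + 1) * (2 * (16 * ν) ^ r) := by gcongr
    _ = 2 * (2 * (32 * ν) ^ r) := by
        rw [show 32 * ν = 2 * (16 * ν) by ring, mul_pow 2 (16 * ν)]
        ring
    _ ≤ 2 * (2 ^ r * (32 * ν) ^ r) := by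
        gcongr
        exact Nat.le_self_pow (by omega) 2
    _ = 2 * (64 * ν) ^ r := by
        rw [← mul_pow]
        ring
    _ ≤ 2 * ((8 * ν) ^ 2) ^ r := by
        gcongr
        nlinarith
    _ = 2 * (8 * ν) ^ (2 * r) := by rw [pow_mul]

lemma two_pow_card_le (Q : Finset (Pt ν)) : 2 ^ Q.card ≤ 2 ^ (2 * lsize Q) + 1 :=
  calc 2 ^ Q.card ≤ 2 ^ (lsize Q + 1) := by
        gcongr
        · norm_num
        · exact card_le_lsize_add_one Q
    _ = 2 * 2 ^ lsize Q * 1 := by ring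
    _ ≤ (2 ^ lsize Q) ^ 2 + 1 ^ 2 := two_mul_le_add_sq _ _
    _ = 2 ^ (2 * lsize Q) + 1 := by ring

end Families

theorem card_QConnected_families_lt_general {ν r : ℕ} (hν : 1 ≤ ν) (hr : 1 ≤ r)
    (Q : Finset (Pt ν)) {n : ℕ} (hn : n ≠ 0) :
    {Γ : Finset (Pt ν) →₀ ℕ | ↑Γ.support ⊆ Bfam ν r ∧ famLen Γ = n ∧
      QConnected Q Γ}.Finite ∧
    {Γ : Finset (Pt ν) →₀ ℕ | ↑Γ.support ⊆ Bfam ν r ∧ famLen Γ = n ∧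
      QConnected Q Γ}.ncard < 2 ^ (2 * lsize Q) * (2 * (8 * ν) ^ (2 * r)) ^ n := by
  obtain ⟨m, rfl⟩ := Nat.exists_eq_succ_of_ne_zero hn
  set F := {Γ : Finset (Pt ν) →₀ ℕ | ↑Γ.support ⊆ Bfam ν r ∧ famLen Γ = m + 1 ∧ QConnected Q Γ}
  set A := 2 ^ (r + 1) * ∑ m ∈ Finset.range (r + 1), (16 * ν) ^ m
  have hsub : F ⊆ {Γ | (∀ C ∈ Γ.support, lsize C ≤ r) ∧ famLen Γ = m + 1 ∧ QConnected Q Γ} :=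
    fun Γ hΓ => ⟨fun C hC => (hΓ.1 hC).2, hΓ.2⟩
  have hcount : F.encard + (A : ℕ∞) ^ (m + 1) ≤ 2 ^ Q.card * (A : ℕ∞) ^ (m + 1) :=
    le_trans (by gcongr) (encard_QConnected_families_succ_add_le r Q m)
  have hfin : F.Finite := Set.finite_of_encard_le_coe
    (k := 2 ^ Q.card * A ^ (m + 1)) (by exact_mod_cast le_of_add_le_left hcount)
  rw [← hfin.cast_ncard_eq] at hcount
  have hncard : F.ncard + A ^ (m + 1) ≤ 2 ^ Q.card * A ^ (m + 1) := by exact_mod_cast hcount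
  have hle : F.ncard ≤ 2 ^ (2 * lsize Q) * A ^ (m + 1) := by
    refine Nat.le_of_add_le_add_right (hncard.trans ?_)
    rw [← add_one_mul]
    exact Nat.mul_le_mul_right _ (two_pow_card_le Q)
  refine ⟨hfin, hle.trans_lt ?_⟩
  gcongr
  exact two_pow_mul_geomSum_lt hν hr

/-- Let `Q ⊆ ℤ^ν` be a finite set with at least two elements,
`q = S(Q)`, and fix an integer `n > 1`. Then the number of `Q`-connected families `Γ`
of length `n` is less than `2^{2q} (2 (8ν)^{2r})^n`. -/
theorem card_QConnected_families_lt {ν r : ℕ} (hν : 1 ≤ ν) (hr : 1 ≤ r)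
    (Q : Finset (Pt ν)) (hQ : 2 ≤ Q.card) (q : ℕ) (hq : q = lsize Q)
    (n : ℕ) (hn : 1 < n) :
    {Γ : Finset (Pt ν) →₀ ℕ | ↑Γ.support ⊆ Bfam ν r ∧ famLen Γ = n ∧
      QConnected Q Γ}.Finite ∧
    {Γ : Finset (Pt ν) →₀ ℕ | ↑Γ.support ⊆ Bfam ν r ∧ famLen Γ = n ∧
      QConnected Q Γ}.ncard < 2 ^ (2 * q) * (2 * (8 * ν) ^ (2 * r)) ^ n := by
  subst hq
  exact card_QConnected_families_lt_general hν hr Q (by omega)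
end
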